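/- arXiv:1607.05121 — 6 statements merged into one kernel-verified Lean document; each statement's English description precedes it below -/
import Mathlib

section
/- Let V be a finite-dimensional subspace of the space of complex sequences (functions ℕ → ℂ) such that V is invariant under the shift operator S (i.e., for every y ∈ V, the shifted sequence S y belongs to V) and the restriction of S to V is injective. Then there exist finitely many distinct nonzero complex numbers λ₁, …, λ_s and positive integers l₁, …, l_s such that V is the internal direct sum of the subspaces G_{λ₁,l₁}, …, G_{λ_s,l_s}. -/
/-!
The `c`-eigenspace of the shift `S` is the line spanned by `n ↦ c ^ n`, so `ker (S - c) ^ m` has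
dimension at most `m`. A subspace of dimension `m` inside `ker (S - c) ^ m` is therefore equal
to it. For `c ≠ 0` this applies to `G c m`, on which `S - c` acts as `c` times the forward
difference of the polynomial factor. It also applies, with `m` its own dimension, to the part of
`V` lying in the generalized `c`-eigenspace of `S`. Hence that part of `V` is some `G c m`, and `V`
is the direct sum of these parts; injectivity of the shift on `V` excludes `c = 0`.
-/

open Polynomial

/-- The linear map sending a polynomial `p` to the sequence `n ↦ c ^ n * p n`. -/
noncomputable def seqOfPoly (c : ℂ) : Polynomial ℂ →ₗ[ℂ] (ℕ → ℂ) where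
  toFun p := fun n => c ^ n * p.eval (n : ℂ)
  map_add' p q := by funext n; simp [mul_add]
  map_smul' a p := by funext n; simp; ring

/-- `G c m` is the space of sequences `n ↦ c ^ n * p n` with `p` a polynomial of degree `< m`. -/
noncomputable def G (c : ℂ) (m : ℕ) : Submodule ℂ (ℕ → ℂ) :=
  (Polynomial.degreeLT ℂ m).map (seqOfPoly c)

/-- The shift operator on complex sequences, `(S y) n = y (n + 1)`. -/
def shiftOp : Module.End ℂ (ℕ → ℂ) where
  toFun y := fun n => y (n + 1)
  map_add' _ _ := rfl
  map_smul' _ _ := rfl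

section Eigenvalue

open Module Module.End

variable {R M : Type*} [CommRing R] [AddCommGroup M] [Module R M] {f : End R M} {μ : R}

lemma ne_zero_of_hasEigenvalue_of_injective (hf : Function.Injective f)
    (hμ : f.HasEigenvalue μ) : μ ≠ 0 := by
  rintro rfl
  obtain ⟨x, hx⟩ := hμ.exists_hasEigenvector
  exact hx.2 (hf (by rw [hx.apply_eq_smul, zero_smul, map_zero]))

lemma hasEigenvalue_restrict_iff {p : Submodule R M} (hf : ∀ x ∈ p, f x ∈ p) :
    HasEigenvalue (f.restrict hf) μ ↔ p ⊓ f.maxGenEigenspace μ ≠ ⊥ := by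
  rw [HasEigenvalue, ← hasUnifEigenvalue_iff_hasUnifEigenvalue_one ENat.top_pos,
    HasUnifEigenvalue, maxGenEigenspace, p.inf_genEigenspace f hf, Ne, Ne,
    (Submodule.map_injective_of_injective p.injective_subtype).eq_iff' (Submodule.map_bot _)]

end Eigenvalue

section InvariantSubspace

open Module Module.End

variable {K M : Type*} [Field K] [AddCommGroup M] [Module K M] {f : End K M} {μ : K}
  {p : Submodule K M}

lemma rank_genEigenspace_le (f : End K M) (μ : K) (n : ℕ) :
    Module.rank K (f.genEigenspace μ n) ≤ n * Module.rank K (f.eigenspace μ) := by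
  induction n with
  | zero => simp
  | succ n ih =>
    have hcomap : f.genEigenspace μ ↑(n + 1) = (f.genEigenspace μ n).comap (f - μ • 1) := by
      rw [genEigenspace_nat, genEigenspace_nat, pow_succ, mul_eq_comp, LinearMap.ker_comp]
    calc
      Module.rank K (f.genEigenspace μ ↑(n + 1))
      _ ≤ Module.rank K (f.genEigenspace μ n) + Module.rank K (f - μ • 1).ker := by
        have h := LinearMap.lift_rank_comap_le (f := f - μ • 1) (f.genEigenspace μ n)
        rwa [← hcomap, Cardinal.lift_id, Cardinal.lift_id, Cardinal.lift_id] at h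
      _ ≤ n * Module.rank K (f.eigenspace μ) + Module.rank K (f.eigenspace μ) := by
        rw [← eigenspace_def]
        gcongr
      _ = ↑(n + 1) * Module.rank K (f.eigenspace μ) := by
        push_cast
        ring

lemma eq_genEigenspace_of_le_of_le_finrank {n : ℕ} (hμ : Module.rank K (f.eigenspace μ) ≤ 1)
    (hp : p ≤ f.genEigenspace μ n) (hn : n ≤ finrank K p) : p = f.genEigenspace μ n := by
  have hrank : Module.rank K (f.genEigenspace μ n) ≤ n :=
    (rank_genEigenspace_le f μ n).trans (mul_le_of_le_one_right' hμ)
  have : FiniteDimensional K (f.genEigenspace μ n) :=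
    Module.rank_lt_aleph0_iff.1 (hrank.trans_lt Cardinal.natCast_lt_aleph0)
  exact Submodule.eq_of_le_of_finrank_le hp ((finrank_le_of_rank_le hrank).trans hn)

lemma le_genEigenspace_finrank_of_le_maxGenEigenspace [FiniteDimensional K p]
    (hf : ∀ x ∈ p, f x ∈ p) (hp : p ≤ f.maxGenEigenspace μ) :
    p ≤ f.genEigenspace μ (finrank K p) := by
  have hinf : p ⊓ f.maxGenEigenspace μ = p ⊓ f.genEigenspace μ (finrank K p) := by
    rw [maxGenEigenspace, p.inf_genEigenspace f hf, p.inf_genEigenspace f hf, ← maxGenEigenspace,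
      maxGenEigenspace_eq_genEigenspace_finrank]
  rwa [inf_eq_left.2 hp, eq_comm, inf_eq_left] at hinf

lemma inf_maxGenEigenspace_eq_genEigenspace_finrank [FiniteDimensional K p]
    (hf : ∀ x ∈ p, f x ∈ p) (hμ : Module.rank K (f.eigenspace μ) ≤ 1) :
    p ⊓ f.maxGenEigenspace μ =
      f.genEigenspace μ (finrank K ↥(p ⊓ f.maxGenEigenspace μ)) := by
  have hinv : ∀ x ∈ p ⊓ f.maxGenEigenspace μ, f x ∈ p ⊓ f.maxGenEigenspace μ := fun x hx =>
    ⟨hf x hx.1, mapsTo_maxGenEigenspace_of_comm (Commute.refl f) μ hx.2⟩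
  exact eq_genEigenspace_of_le_of_le_finrank hμ
    (le_genEigenspace_finrank_of_le_maxGenEigenspace hinv inf_le_right) le_rfl

lemma iSup_hasEigenvalue_inf_maxGenEigenspace_eq [IsAlgClosed K] [FiniteDimensional K p]
    (hf : ∀ x ∈ p, f x ∈ p) :
    ⨆ μ ∈ {μ | HasEigenvalue (f.restrict hf) μ}, p ⊓ f.maxGenEigenspace μ = p := by
  simp_rw [Set.mem_ofPred_eq, hasEigenvalue_restrict_iff hf]
  rw [iSup_subtype', iSup_ne_bot_subtype]
  simp_rw [maxGenEigenspace, p.inf_genEigenspace f hf]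
  rw [← Submodule.map_iSup, iSup_maxGenEigenspace_eq_top, Submodule.map_subtype_top]

end InvariantSubspace

section Shift

open Module Module.End

lemma rank_eigenspace_shiftOp_le_one (c : ℂ) : Module.rank ℂ (shiftOp.eigenspace c) ≤ 1 := by
  refine (rank_submodule_le_one_iff' _).2 ⟨fun n => c ^ n, fun y hy => ?_⟩
  have hrec (n : ℕ) : y (n + 1) = c * y n := congrFun (mem_eigenspace_iff.1 hy) n
  refine Submodule.mem_span_singleton.2 ⟨y 0, funext fun n => ?_⟩
  induction n with
  | zero => simp
  | succ n ih =>
    rw [hrec, ← ih, Pi.smul_apply, Pi.smul_apply, smul_eq_mul, smul_eq_mul]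
    ring

lemma shiftOp_sub_smul_pow_apply (c : ℂ) (k : ℕ) (f : ℂ → ℂ) :
    ((shiftOp - c • 1) ^ k) (fun n : ℕ => c ^ n * f n) =
      fun n : ℕ => c ^ (n + k) * ((fwdDiff 1)^[k] f) n := by
  induction k with
  | zero => simp
  | succ k ih =>
    rw [pow_succ', mul_apply, ih, Function.iterate_succ_apply']
    funext n
    change c ^ (n + 1 + k) * ((fwdDiff 1)^[k] f) ↑(n + 1) -
      c * (c ^ (n + k) * ((fwdDiff 1)^[k] f) n) = _
    rw [fwdDiff]
    push_cast
    ring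

lemma G_le_genEigenspace (c : ℂ) (m : ℕ) : G c m ≤ shiftOp.genEigenspace c m := by
  rintro _ ⟨p, hp, rfl⟩
  -- `p = 0` is treated apart: `natDegree 0 = 0` is not below `m` when `m = 0`.
  rcases eq_or_ne p 0 with rfl | hp0
  · simp
  · have hdeg : p.natDegree < m := (natDegree_lt_iff_degree_lt hp0).2 (mem_degreeLT.1 hp)
    rw [mem_genEigenspace_nat, LinearMap.mem_ker]
    refine (shiftOp_sub_smul_pow_apply c m p.eval).trans (funext fun n => ?_)
    rw [fwdDiff_iter_eq_zero_of_degree_lt hdeg, Pi.zero_apply, mul_zero, Pi.zero_apply]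

lemma seqOfPoly_injective {c : ℂ} (hc : c ≠ 0) : Function.Injective (seqOfPoly c) := by
  intro p q hpq
  have heval (n : ℕ) : p.eval (n : ℂ) = q.eval (n : ℂ) :=
    mul_left_cancel₀ (pow_ne_zero n hc) (congrFun hpq n)
  exact eq_of_infinite_eval_eq p q
    ((Set.infinite_range_of_injective Nat.cast_injective).mono (Set.range_subset_iff.2 heval))

lemma finrank_G {c : ℂ} (hc : c ≠ 0) (m : ℕ) : finrank ℂ (G c m) = m := by
  rw [G, ← ((degreeLT ℂ m).equivMapOfInjective _ (seqOfPoly_injective hc)).finrank_eq,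
    (degreeLTEquiv ℂ m).finrank_eq, finrank_fin_fun]

lemma G_eq_genEigenspace {c : ℂ} (hc : c ≠ 0) (m : ℕ) : G c m = shiftOp.genEigenspace c m :=
  eq_genEigenspace_of_le_of_le_finrank (rank_eigenspace_shiftOp_le_one c)
    (G_le_genEigenspace c m) (finrank_G hc m).ge

lemma iSupIndep_G {ι : Type*} {c : ι → ℂ} (hc : Function.Injective c) (l : ι → ℕ) :
    iSupIndep fun i => G (c i) (l i) :=
  (shiftOp.independent_maxGenEigenspace.comp hc).mono fun i =>
    (G_le_genEigenspace (c i) (l i)).trans ((shiftOp.genEigenspace (c i)).monotone le_top)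

end Shift

/-- A finite-dimensional shift-invariant subspace of complex sequences on which the shift is
injective is the internal direct sum of spaces of arithmetic-geometric sequences. -/
theorem stmt_0 (V : Submodule ℂ (ℕ → ℂ)) (hfin : FiniteDimensional ℂ V)
    (hinv : ∀ y ∈ V, shiftOp y ∈ V)
    (hinj : Function.Injective fun y : V => shiftOp (y : ℕ → ℂ)) :
    ∃ (s : ℕ) (c : Fin s → ℂ) (l : Fin s → ℕ),
      Function.Injective c ∧ (∀ i, c i ≠ 0) ∧ (∀ i, 0 < l i) ∧
      (∀ y : Fin s → (ℕ → ℂ), (∀ i, y i ∈ G (c i) (l i)) → ∑ i, y i = 0 → ∀ i, y i = 0) ∧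
      (⨆ i, G (c i) (l i)) = V := by
  let T : Module.End ℂ V := shiftOp.restrict hinv
  let d (μ : ℂ) : ℕ := Module.finrank ℂ ↥(V ⊓ shiftOp.maxGenEigenspace μ)
  have hT : Function.Injective T := fun x y hxy => hinj (congrArg Subtype.val hxy)
  obtain ⟨s, c, hc_inj, hc_range⟩ := T.finite_hasEigenvalue.fin_param
  have hc_eigen (i : Fin s) : T.HasEigenvalue (c i) := hc_range.le (Set.mem_range_self i)
  have hc_ne_zero (i : Fin s) : c i ≠ 0 := ne_zero_of_hasEigenvalue_of_injective hT (hc_eigen i)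
  have hG (i : Fin s) : G (c i) (d (c i)) = V ⊓ shiftOp.maxGenEigenspace (c i) := by
    rw [G_eq_genEigenspace (hc_ne_zero i), ← inf_maxGenEigenspace_eq_genEigenspace_finrank hinv
      (rank_eigenspace_shiftOp_le_one _)]
  refine ⟨s, c, fun i => d (c i), hc_inj, hc_ne_zero, fun i => ?_, fun y hy hsum i => ?_, ?_⟩
  · have hne_bot := (hasEigenvalue_restrict_iff hinv).1 (hc_eigen i)
    exact Nat.pos_of_ne_zero (Submodule.finrank_eq_zero.not.2 hne_bot)
  · exact (iSupIndep_iff_finsetSum_eq_zero_imp_eq_zero _).1 (iSupIndep_G hc_inj _) Finset.univ y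
      (fun i _ => hy i) hsum i (Finset.mem_univ i)
  · simp_rw [hG]
    rw [← iSup_range (g := fun μ => V ⊓ shiftOp.maxGenEigenspace μ), hc_range,
      iSup_hasEigenvalue_inf_maxGenEigenspace_eq hinv]
end

section
/- Let V be a finite-dimensional subspace of the space of infinitely differentiable functions from ℝ to ℂ such that V is invariant under differentiation (i.e., for every y ∈ V, the derivative y′ belongs to V). Then there exist finitely many distinct complex numbers λ₁, …, λ_s and positive integers l₁, …, l_s such that V is the internal direct sum of the subspaces H_{λ₁,l₁}, …, H_{λ_s,l_s}. -/
/-!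
For differentiable `y`, we have `y ∈ H c (k + 1)` if and only if `y' - c y ∈ H c k`, because
`t ↦ exp (c t) * q t` solves `y' - c y = exp (c t) * q' t` and all other solutions differ from it
by a multiple of `exp (c t)`. So if `D` is differentiation on `V`, then the kernel of `(D - c) ^ k`
is `V ⊓ H c k`, and for `k = dim V` these intersections, one for each eigenvalue `c` of `D`, have
direct sum `V`.

The polynomials `p` of degree `< k` with `exp (c t) * p t` in `V` form a space closed under
`p ↦ p'`. Such a space consists of all polynomials of degree `< m`, for some `m`: the successive
derivatives of an element of degree `n` have degrees `n, n - 1, …, 0`. Hence `V ⊓ H c k = H c m`.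
-/

open Polynomial

/-- The linear map sending a polynomial `p` to the function `t ↦ exp (c t) * p t`. -/
noncomputable def funOfPoly (c : ℂ) : Polynomial ℂ →ₗ[ℂ] (ℝ → ℂ) where
  toFun p := fun t => Complex.exp (c * t) * p.eval (t : ℂ)
  map_add' p q := by funext t; simp [mul_add]
  map_smul' a p := by funext t; simp; ring

/-- `H c m` is the space of functions `t ↦ exp (c t) * p t` with `p` a polynomial of degree `< m`. -/
noncomputable def H (c : ℂ) (m : ℕ) : Submodule ℂ (ℝ → ℂ) :=
  (Polynomial.degreeLT ℂ m).map (funOfPoly c)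

theorem exists_fin_injective_ne_bot_iSup_eq {ι α : Type*} [CompleteLattice α] [WellFoundedGT α]
    {t : ι → α} (ht : iSupIndep t) :
    ∃ (s : ℕ) (e : Fin s → ι),
      Function.Injective e ∧ (∀ i, t (e i) ≠ ⊥) ∧ ⨆ i, t (e i) = ⨆ i, t i := by
  have : Finite {i // t i ≠ ⊥} := WellFoundedGT.finite_ne_bot_of_iSupIndep ht
  let e := (Finite.equivFin {i // t i ≠ ⊥}).symm
  exact ⟨_, fun i => e i, Subtype.val_injective.comp e.injective, fun i => (e i).2,
    (e.iSup_comp (g := fun i => t i.1)).trans (iSup_ne_bot_subtype t)⟩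

section DerivativeClosed

theorem degreeLT_zero (R : Type*) [Semiring R] : degreeLT R 0 = ⊥ :=
  (Submodule.eq_bot_iff _).2 fun p hp => by simpa [mem_degreeLT] using hp

theorem derivative_mem_degreeLT_iff {R : Type*} [Semiring R] [IsAddTorsionFree R] {p : R[X]}
    {n : ℕ} : derivative p ∈ degreeLT R n ↔ p ∈ degreeLT R (n + 1) := by
  simp only [mem_degreeLT, degree_lt_iff_coeff_zero]
  constructor
  · intro h k hk
    obtain ⟨j, rfl⟩ := Nat.exists_eq_add_of_le' (Nat.one_le_of_lt hk)
    have hj := h j (Nat.le_of_succ_le_succ hk)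
    rw [coeff_derivative, ← Nat.cast_succ, ← nsmul_eq_mul'] at hj
    exact (nsmul_eq_zero_iff_right j.succ_ne_zero).1 hj
  · intro h k hk
    rw [coeff_derivative, h (k + 1) (by lia), zero_mul]

variable {K : Type*} [Field K]

theorem degreeLT_succ_le {P : Submodule K K[X]} {p : K[X]} {n : ℕ} (hp : p ∈ P)
    (hdeg : p.degree = n) (hP : degreeLT K n ≤ P) : degreeLT K (n + 1) ≤ P := by
  intro q hq
  have hlead : p.coeff n ≠ 0 := coeff_ne_zero_of_eq_degree hdeg
  have hsub : q - (q.coeff n / p.coeff n) • p ∈ degreeLT K n := by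
    rw [mem_degreeLT, degree_lt_iff_coeff_zero] at hq ⊢
    intro k hk
    rcases hk.eq_or_lt with rfl | hk
    · simp [hlead]
    · have hpk : p.coeff k = 0 := coeff_eq_zero_of_degree_lt (hdeg ▸ by exact_mod_cast hk)
      simp [hq k hk, hpk]
  simpa using P.add_mem (hP hsub) (P.smul_mem (q.coeff n / p.coeff n) hp)

variable [CharZero K]

theorem derivative_surjective : Function.Surjective (derivative : K[X] →ₗ[K] K[X]) := by
  intro p
  induction p using Polynomial.induction_on' with
  | add p q hp hq =>
    obtain ⟨a, rfl⟩ := hp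
    obtain ⟨b, rfl⟩ := hq
    exact ⟨a + b, map_add _ a b⟩
  | monomial n a =>
    have hn : (n : K) + 1 ≠ 0 := Nat.cast_add_one_ne_zero n
    exact ⟨monomial (n + 1) (a / (n + 1)), by simp [hn]⟩

theorem degreeLT_succ_le_of_derivative_mem {P : Submodule K K[X]}
    (hP : ∀ p ∈ P, derivative p ∈ P) {n : ℕ} {p : K[X]} (hp : p ∈ P) (hdeg : p.degree = n) :
    degreeLT K (n + 1) ≤ P := by
  induction n generalizing p with
  | zero => exact degreeLT_succ_le hp hdeg (by simp only [degreeLT_zero, bot_le])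
  | succ n ih =>
    refine degreeLT_succ_le hp hdeg (ih (hP p hp) ?_)
    have hnat : p.natDegree = n + 1 := natDegree_eq_of_degree_eq_some hdeg
    rw [degree_derivative (by lia), hnat, Nat.add_sub_cancel]

theorem exists_eq_degreeLT {P : Submodule K K[X]} (hP : ∀ p ∈ P, derivative p ∈ P) {n : ℕ}
    (hn : P ≤ degreeLT K n) : ∃ m, P = degreeLT K m := by
  induction n with
  | zero => exact ⟨0, le_antisymm hn (by simp only [degreeLT_zero, bot_le])⟩
  | succ n ih =>
    by_cases hlt : P ≤ degreeLT K n
    · exact ih hlt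
    · obtain ⟨p, hp, hpn⟩ := SetLike.not_le_iff_exists.1 hlt
      have hdeg : p.degree = n := by
        have hle := hn hp
        rw [degreeLT_succ_eq_degreeLE, mem_degreeLE] at hle
        exact le_antisymm hle (not_lt.1 (mt mem_degreeLT.2 hpn))
      exact ⟨n + 1, le_antisymm hn (degreeLT_succ_le_of_derivative_mem hP hp hdeg)⟩

end DerivativeClosed

section Exponential

theorem hasDerivAt_cexp_mul_ofReal (c : ℂ) (t : ℝ) :
    HasDerivAt (fun t : ℝ => Complex.exp (c * t)) (Complex.exp (c * t) * c) t := by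
  simpa using ((hasDerivAt_id (t : ℂ)).const_mul c).cexp.comp_ofReal

theorem eq_cexp_smul_of_deriv_eq_smul {E : Type*} [NormedAddCommGroup E] [NormedSpace ℝ E]
    [NormedSpace ℂ E] [IsScalarTower ℝ ℂ E] {c : ℂ} {y : ℝ → E} (hy : Differentiable ℝ y)
    (hderiv : deriv y = c • y) (t : ℝ) : y t = Complex.exp (c * t) • y 0 := by
  have hzero : ∀ x : ℝ, HasDerivAt (fun x : ℝ => Complex.exp (-c * x) • y x) 0 x := by
    intro x
    refine ((hasDerivAt_cexp_mul_ofReal (-c) x).smul (hy x).hasDerivAt).congr_deriv ?_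
    rw [hderiv, Pi.smul_apply, smul_smul, ← add_smul]
    simp
  have hconst : Complex.exp (-c * t) • y t = y 0 := by
    simpa using is_const_of_deriv_eq_zero (fun x => (hzero x).differentiableAt)
      (fun x => (hzero x).deriv) t 0
  rw [← hconst, smul_smul, ← Complex.exp_add]
  simp

end Exponential

section ExpPolynomial

variable {c : ℂ}

theorem funOfPoly_apply (p : ℂ[X]) (t : ℝ) :
    funOfPoly c p t = Complex.exp (c * t) * p.eval (t : ℂ) := rfl

theorem hasDerivAt_funOfPoly (p : ℂ[X]) (t : ℝ) :
    HasDerivAt (funOfPoly c p) ((c • funOfPoly c p + funOfPoly c (derivative p)) t) t := by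
  refine ((hasDerivAt_cexp_mul_ofReal c t).mul
    (p.hasDerivAt (t : ℂ)).comp_ofReal).congr_deriv ?_
  simp only [funOfPoly_apply, Pi.add_apply, Pi.smul_apply, smul_eq_mul]
  ring

theorem differentiable_funOfPoly (p : ℂ[X]) : Differentiable ℝ (funOfPoly c p) :=
  fun t => (hasDerivAt_funOfPoly p t).differentiableAt

theorem deriv_funOfPoly (p : ℂ[X]) :
    deriv (funOfPoly c p) = c • funOfPoly c p + funOfPoly c (derivative p) :=
  funext fun t => (hasDerivAt_funOfPoly p t).deriv

theorem eq_funOfPoly_C_of_deriv_eq_smul {y : ℝ → ℂ} (hy : Differentiable ℝ y)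
    (hderiv : deriv y = c • y) : y = funOfPoly c (C (y 0)) := by
  funext t
  simpa [funOfPoly_apply] using eq_cexp_smul_of_deriv_eq_smul hy hderiv t

theorem H_zero (c : ℂ) : H c 0 = ⊥ := by
  rw [H, degreeLT_zero, Submodule.map_bot]

theorem mem_H_succ_iff {y : ℝ → ℂ} (hy : Differentiable ℝ y) {k : ℕ} :
    y ∈ H c (k + 1) ↔ deriv y - c • y ∈ H c k := by
  constructor
  · rintro ⟨p, hp, rfl⟩
    exact ⟨derivative p, derivative_mem_degreeLT_iff.2 hp, by rw [deriv_funOfPoly]; abel⟩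
  · rintro ⟨p, hp, hpy⟩
    obtain ⟨q, rfl⟩ := derivative_surjective p
    have hdiff : Differentiable ℝ (y - funOfPoly c q) := hy.sub (differentiable_funOfPoly q)
    have hderiv : deriv (y - funOfPoly c q) = c • (y - funOfPoly c q) := by
      have hsub : deriv (y - funOfPoly c q) = deriv y - deriv (funOfPoly c q) :=
        funext fun t => deriv_sub (hy t) (differentiable_funOfPoly q t)
      rw [hsub, deriv_funOfPoly, hpy, smul_sub]
      abel
    have hconst := eq_funOfPoly_C_of_deriv_eq_smul hdiff hderiv
    refine ⟨q + C ((y - funOfPoly c q) 0), ?_, ?_⟩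
    · exact derivative_mem_degreeLT_iff.1 (by simpa using hp)
    · rw [map_add, ← hconst, add_sub_cancel]

theorem exists_inf_H_eq_H {V : Submodule ℂ (ℝ → ℂ)} (hinv : ∀ y ∈ V, deriv y ∈ V) (c : ℂ)
    (k : ℕ) : ∃ m, V ⊓ H c k = H c m := by
  have hP : ∀ p ∈ degreeLT ℂ k ⊓ V.comap (funOfPoly c),
      derivative p ∈ degreeLT ℂ k ⊓ V.comap (funOfPoly c) := by
    rintro p ⟨hpk, hpV⟩
    refine ⟨derivative_mem_degreeLT_iff.2 (degreeLT_mono k.le_succ hpk), ?_⟩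
    have hmem := V.sub_mem (hinv _ hpV) (V.smul_mem c hpV)
    rwa [deriv_funOfPoly, add_sub_cancel_left] at hmem
  obtain ⟨m, hm⟩ := exists_eq_degreeLT hP inf_le_left
  exact ⟨m, by rw [inf_comm, H, Submodule.map_inf_eq_map_inf_comap, hm, H]⟩

end ExpPolynomial

section DerivEnd

variable {R 𝕜 F : Type*} [Semiring R] [NontriviallyNormedField 𝕜] [NormedAddCommGroup F]
  [NormedSpace 𝕜 F] [Module R F] [SMulCommClass 𝕜 R F] [ContinuousConstSMul R F]

/-- Differentiation as an endomorphism of a function space `V` closed under it, so that spectral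
theory applies. The functions in `V` must be differentiable, as `deriv` is not additive in
general. -/
noncomputable def derivEnd (V : Submodule R (𝕜 → F)) (hdiff : ∀ y ∈ V, Differentiable 𝕜 y)
    (hinv : ∀ y ∈ V, deriv y ∈ V) : Module.End R V where
  toFun y := ⟨deriv y, hinv y y.2⟩
  map_add' y z := Subtype.ext <| funext fun t => deriv_add (hdiff y y.2 t) (hdiff z z.2 t)
  map_smul' a y := Subtype.ext <| funext fun t => deriv_const_smul a (hdiff y y.2 t)

theorem coe_derivEnd_apply {V : Submodule R (𝕜 → F)} (hdiff : ∀ y ∈ V, Differentiable 𝕜 y)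
    (hinv : ∀ y ∈ V, deriv y ∈ V) (y : V) : (derivEnd V hdiff hinv y : 𝕜 → F) = deriv y := rfl

variable {V : Submodule ℂ (ℝ → ℂ)} (hdiff : ∀ y ∈ V, Differentiable ℝ y)
  (hinv : ∀ y ∈ V, deriv y ∈ V)

theorem derivEnd_sub_smul_one_pow_apply_eq_zero_iff (c : ℂ) (k : ℕ) (y : V) :
    ((derivEnd V hdiff hinv - c • 1) ^ k) y = 0 ↔ (y : ℝ → ℂ) ∈ H c k := by
  induction k generalizing y with
  | zero => simp [H_zero]
  | succ k ih =>
    rw [pow_succ, Module.End.mul_apply, ih, mem_H_succ_iff (hdiff y y.2)]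
    simp [coe_derivEnd_apply]

theorem map_subtype_genEigenspace_derivEnd (c : ℂ) (k : ℕ) :
    ((derivEnd V hdiff hinv).genEigenspace c k).map V.subtype = V ⊓ H c k := by
  have hcomap : (derivEnd V hdiff hinv).genEigenspace c k = (H c k).comap V.subtype := by
    ext y
    exact Module.End.mem_genEigenspace_nat.trans
      (derivEnd_sub_smul_one_pow_apply_eq_zero_iff hdiff hinv c k y)
  rw [hcomap, Submodule.map_comap_subtype]

theorem exists_map_subtype_maxGenEigenspace_derivEnd_eq_H [FiniteDimensional ℂ V] (c : ℂ) :
    ∃ m, ((derivEnd V hdiff hinv).maxGenEigenspace c).map V.subtype = H c m := by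
  rw [Module.End.maxGenEigenspace_eq_genEigenspace_finrank, map_subtype_genEigenspace_derivEnd]
  exact exists_inf_H_eq_H hinv c _

theorem exists_iSupIndep_H_and_iSup_H_eq {V : Submodule ℂ (ℝ → ℂ)} [FiniteDimensional ℂ V]
    (hdiff : ∀ y ∈ V, Differentiable ℝ y) (hinv : ∀ y ∈ V, deriv y ∈ V) :
    ∃ (s : ℕ) (c : Fin s → ℂ) (l : Fin s → ℕ), Function.Injective c ∧ (∀ i, 0 < l i) ∧
      iSupIndep (fun i => H (c i) (l i)) ∧ ⨆ i, H (c i) (l i) = V := by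
  let D := derivEnd V hdiff hinv
  choose m hm using exists_map_subtype_maxGenEigenspace_derivEnd_eq_H hdiff hinv
  obtain ⟨s, c, hc, hne, hsup⟩ := exists_fin_injective_ne_bot_iSup_eq D.independent_maxGenEigenspace
  refine ⟨s, c, m ∘ c, hc, fun i => Nat.pos_of_ne_zero fun hzero => hne i ?_, ?_, ?_⟩
  · apply Submodule.map_injective_of_injective V.injective_subtype
    rw [hm, show m (c i) = 0 from hzero, H_zero, Submodule.map_bot]
  · simpa only [Function.comp_apply, ← hm] using
      V.subtype.iSupIndep_map V.injective_subtype (D.independent_maxGenEigenspace.comp hc)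
  · simp only [Function.comp_apply, ← hm]
    rw [← Submodule.map_iSup, hsup, D.iSup_maxGenEigenspace_eq_top, Submodule.map_subtype_top]

end DerivEnd

/-- A finite-dimensional subspace of smooth functions invariant under differentiation is the
internal direct sum of polynomial-exponential spaces. -/
theorem stmt_2 (V : Submodule ℂ (ℝ → ℂ)) (hfin : FiniteDimensional ℂ V)
    (hsmooth : ∀ y ∈ V, ContDiff ℝ (⊤ : ℕ∞) y)
    (hinv : ∀ y ∈ V, deriv y ∈ V) :
    ∃ (s : ℕ) (c : Fin s → ℂ) (l : Fin s → ℕ),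
      Function.Injective c ∧ (∀ i, 0 < l i) ∧
      (∀ y : Fin s → (ℝ → ℂ), (∀ i, y i ∈ H (c i) (l i)) → ∑ i, y i = 0 → ∀ i, y i = 0) ∧
      (⨆ i, H (c i) (l i)) = V := by
  have hdiff : ∀ y ∈ V, Differentiable ℝ y := fun y hy => (hsmooth y hy).differentiable (by simp)
  obtain ⟨s, c, l, hc, hl, hind, hsup⟩ := exists_iSupIndep_H_and_iSup_H_eq hdiff hinv
  refine ⟨s, c, l, hc, hl, fun y hy hsum i => ?_, hsup⟩
  exact (iSupIndep_iff_finsetSum_eq_zero_imp_eq_zero _).1 hind Finset.univ y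
    (fun i _ => hy i) hsum i (Finset.mem_univ i)
end

section
/- Let λ be a nonzero complex number and m a positive integer. Then the kernel of the m-th power of (S − λ id), acting on the space of complex sequences, equals G_{λ,m}; that is, for a sequence y : ℕ → ℂ, one has (S − λ id)^m y = 0 if and only if there exists a polynomial p with complex coefficients of degree < m such that y n = λ^n · p(n) for all n. -/
open Polynomial

/-!
Writing `y n = c ^ n • z n` turns `S - c` into `c` times the forward difference `Δ`, so everything
reduces to the kernel of `Δ ^ m`. Since `Δ` lowers degrees, that kernel contains the polynomials of
degree `< m`. Conversely, if `Δ ^ m z = 0`, then the Gregory–Newton expansion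
`z n = ∑ k, (n choose k) * (Δ ^ k z) 0` stops before `k = m`, hence is a polynomial in `n`.
-/

open Finset Function

section ForwardDifference

variable {M N G : Type*} [AddCommMonoid M] [AddCommMonoid N] [AddCommGroup G]

lemma fwdDiff_iter_comp_addMonoidHom (φ : M →+ N) (h : M) (f : N → G) (m : ℕ) :
    (fwdDiff h)^[m] (f ∘ φ) = (fwdDiff (φ h))^[m] f ∘ φ := by
  have comp_semiconj : Semiconj (fun g : N → G ↦ g ∘ φ) (fwdDiff (φ h)) (fwdDiff h) := fun g ↦ by
    funext x
    simp only [fwdDiff, comp_apply, map_add]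
  exact (comp_semiconj.iterate_right m f).symm

lemma fwdDiff_iter_zero (h : M) (m : ℕ) : (fwdDiff h)^[m] (0 : M → G) = 0 :=
  iterate_fixed (fwdDiff_const h 0) m

lemma fwdDiff_iter_eq_zero_of_le {h : M} {f : M → G} {m k : ℕ}
    (hf : (fwdDiff h)^[m] f = 0) (hmk : m ≤ k) : (fwdDiff h)^[k] f = 0 := by
  rw [← Nat.sub_add_cancel hmk, iterate_add_apply, hf, fwdDiff_iter_zero]

end ForwardDifference

/-- The shift `(S y) n = y (n + 1)` on sequences in an `R`-module, of which `shiftOp` is the case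
`R = M = ℂ`. -/
def sequenceShift (R M : Type*) [Semiring R] [AddCommMonoid M] [Module R M] :
    Module.End R (ℕ → M) :=
  LinearMap.funLeft R M (· + 1)

lemma sequenceShift_sub_smul_one_pow_apply {R M : Type*} [CommRing R] [AddCommGroup M] [Module R M]
    (c : R) (m : ℕ) (z : ℕ → M) :
    ((sequenceShift R M - c • 1) ^ m) (fun n ↦ c ^ n • z n) =
      fun n ↦ c ^ (n + m) • (fwdDiff 1)^[m] z n := by
  induction m generalizing z with
  | zero => simp
  | succ m ih =>
    have conjugation : (sequenceShift R M - c • 1) (fun n ↦ c ^ n • z n) =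
        c • fun n ↦ c ^ n • fwdDiff 1 z n := by
      funext n
      simp [sequenceShift, LinearMap.funLeft_apply, fwdDiff, smul_sub, smul_smul, pow_succ']
    rw [pow_succ, Module.End.mul_apply, conjugation, map_smul, ih]
    funext n
    rw [Pi.smul_apply, smul_smul, ← pow_succ', add_assoc, iterate_succ_apply]

section PolynomialSequence

variable {R : Type*} [CommRing R]

lemma fwdDiff_iter_eval_natCast_eq_zero {p : R[X]} {m : ℕ} (hp : p.degree < m) :
    (fwdDiff 1)^[m] (fun n : ℕ ↦ p.eval (n : R)) = 0 := by
  obtain rfl | hp0 := eq_or_ne p 0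
  · simpa only [eval_zero] using! fwdDiff_iter_zero 1 m
  have eval_diff : (fwdDiff 1)^[m] p.eval = 0 :=
    fwdDiff_iter_eq_zero_of_degree_lt ((natDegree_lt_iff_degree_lt hp0).mpr hp)
  have diff_natCast := fwdDiff_iter_comp_addMonoidHom (Nat.castAddMonoidHom R) 1 p.eval m
  rw [Nat.coe_castAddMonoidHom, Nat.cast_one, eval_diff] at diff_natCast
  exact diff_natCast

lemma degree_descPochhammer_le (k : ℕ) : (descPochhammer R k).degree ≤ k := by
  rw [← descPochhammer_map (Int.castRingHom R)]
  exact degree_map_le.trans (degree_le_of_natDegree_le (descPochhammer_natDegree ℤ k).le)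

variable [Algebra ℚ R]

/-- The Newton interpolation polynomial `∑ k < m, (X choose k) * (Δ ^ k z) 0` of a sequence `z` at
the nodes `0, …, m - 1`, with `X choose k` written as `descPochhammer R k / k!`. -/
noncomputable def newtonPolynomial (z : ℕ → R) (m : ℕ) : R[X] :=
  ∑ k ∈ range m, ((k.factorial : ℚ)⁻¹ • (fwdDiff 1)^[k] z 0) • descPochhammer R k

lemma degree_newtonPolynomial_lt (z : ℕ → R) (m : ℕ) : (newtonPolynomial z m).degree < m := by
  rw [← mem_degreeLT]
  refine sum_mem fun k hk ↦ Submodule.smul_mem _ _ (mem_degreeLT.mpr ?_)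
  exact (degree_descPochhammer_le k).trans_lt (mod_cast mem_range.mp hk)

lemma eval_natCast_newtonPolynomial (z : ℕ → R) (m n : ℕ) :
    (newtonPolynomial z m).eval (n : R) = ∑ k ∈ range m, n.choose k • (fwdDiff 1)^[k] z 0 := by
  rw [newtonPolynomial, eval_finsetSum]
  refine sum_congr rfl fun k _ ↦ ?_
  rw [eval_smul, descPochhammer_eval_eq_descFactorial, smul_eq_mul, smul_mul_assoc,
    inv_smul_eq_iff₀ (mod_cast k.factorial_ne_zero), Nat.cast_smul_eq_nsmul, smul_smul,
    ← Nat.descFactorial_eq_factorial_mul_choose, nsmul_eq_mul, mul_comm]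

lemma eval_natCast_newtonPolynomial_of_fwdDiff_iter_eq_zero {z : ℕ → R} {m : ℕ}
    (hz : (fwdDiff 1)^[m] z = 0) (n : ℕ) : (newtonPolynomial z m).eval (n : R) = z n := by
  have newton_expansion : z n = ∑ k ∈ range (n + 1), n.choose k • (fwdDiff 1)^[k] z 0 := by
    simpa only [smul_eq_mul, mul_one, zero_add] using shift_eq_sum_fwdDiff_iter 1 z n 0
  rw [eval_natCast_newtonPolynomial, newton_expansion]
  refine sum_congr_of_eq_on_inter (fun k _ hk ↦ ?_) (fun k _ hk ↦ ?_) fun _ _ _ ↦ rfl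
  · rw [Nat.choose_eq_zero_of_lt (by simpa using hk), zero_smul]
  · rw [fwdDiff_iter_eq_zero_of_le hz (by simpa using hk), Pi.zero_apply, smul_zero]

theorem fwdDiff_iter_eq_zero_iff_exists_polynomial {z : ℕ → R} {m : ℕ} :
    (fwdDiff 1)^[m] z = 0 ↔ ∃ p : R[X], p.degree < m ∧ ∀ n : ℕ, z n = p.eval (n : R) := by
  constructor
  · intro hz
    exact ⟨newtonPolynomial z m, degree_newtonPolynomial_lt z m,
      fun n ↦ (eval_natCast_newtonPolynomial_of_fwdDiff_iter_eq_zero hz n).symm⟩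
  · rintro ⟨p, hp, hz⟩
    rw [funext hz, fwdDiff_iter_eval_natCast_eq_zero hp]

theorem stmt_5_general {c : R} (hc : IsUnit c) (m : ℕ) (y : ℕ → R) :
    ((sequenceShift R R - c • 1) ^ m) y = 0 ↔
      ∃ p : R[X], p.degree < m ∧ ∀ n : ℕ, y n = c ^ n * p.eval (n : R) := by
  obtain ⟨z, rfl⟩ : ∃ z : ℕ → R, y = fun n ↦ c ^ n • z n := by
    choose z hz using fun n ↦ (hc.pow n).dvd (a := y n)
    exact ⟨z, funext hz⟩
  calc _ ↔ (fwdDiff 1)^[m] z = 0 := by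
        simp only [sequenceShift_sub_smul_one_pow_apply, funext_iff, Pi.zero_apply,
          (hc.pow _).smul_eq_zero]
    _ ↔ ∃ p : R[X], p.degree < m ∧ ∀ n : ℕ, z n = p.eval (n : R) :=
        fwdDiff_iter_eq_zero_iff_exists_polynomial
    _ ↔ _ := by simp only [smul_eq_mul, (hc.pow _).mul_right_inj]

end PolynomialSequence

/-- The kernel of `(S - c • 1) ^ m` on complex sequences is exactly `G c m`. -/
theorem stmt_5 (c : ℂ) (hc : c ≠ 0) (m : ℕ) (hm : 0 < m) (y : ℕ → ℂ) :
    ((shiftOp - c • 1) ^ m) y = 0 ↔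
      ∃ p : Polynomial ℂ, p.degree < (m : WithBot ℕ) ∧
        ∀ n : ℕ, y n = c ^ n * p.eval (n : ℂ) :=
  stmt_5_general hc.isUnit m y
end

section
/- Let λ be a nonzero complex number and let k ≤ r be nonnegative integers. Then the sequence obtained by applying (S − λ id)^k to the sequence n ↦ n^r · λ^n has the form n ↦ q(n) · λ^n for some polynomial q with complex coefficients of degree exactly r − k. -/
open Polynomial

/-!
Multiplication by `c ^ n` turns the operator `S - c` into `c` times the forward difference, so
`(S - c) ^ k` sends `n ↦ p n * c ^ n` to `n ↦ c ^ k * (Δ ^ k p) n * c ^ n`. In characteristic zero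
`Δ` lowers a positive degree by exactly one: the leading terms of `p (X + 1)` and `p` cancel, and
the next coefficient of the difference is `deg p` times the leading coefficient of `p`.
-/

lemma coeff_taylor_of_natDegree_le_succ {R : Type*} [Semiring R] {p : R[X]} {m : ℕ}
    (hp : p.natDegree ≤ m + 1) (h : R) :
    (taylor h p).coeff m = p.coeff m + (m + 1) * p.coeff (m + 1) * h := by
  have hderiv : (hasseDeriv m p).natDegree < 2 := by
    have := natDegree_hasseDeriv_le p m
    omega
  rw [taylor_coeff, eval_eq_sum_range' hderiv]
  simp [Finset.sum_range_succ, hasseDeriv_coeff, add_comm 1 m]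

section Ring

variable {R : Type*} [Ring R]

/-- The forward difference `p ↦ p (X + h) - p` on polynomials, the counterpart of `fwdDiff` before
evaluation. The translate `p (X + h)` is encoded as `taylor h p`. -/
noncomputable def polynomialFwdDiff (h : R) : R[X] →ₗ[R] R[X] := taylor h - LinearMap.id

lemma polynomialFwdDiff_apply (h : R) (p : R[X]) : polynomialFwdDiff h p = taylor h p - p := rfl

lemma coeff_polynomialFwdDiff_of_natDegree_le_succ {p : R[X]} {m : ℕ} (hp : p.natDegree ≤ m + 1)
    (h : R) : (polynomialFwdDiff h p).coeff m = (m + 1) * p.coeff (m + 1) * h := by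
  rw [polynomialFwdDiff_apply, coeff_sub, coeff_taylor_of_natDegree_le_succ hp, add_sub_cancel_left]

lemma degree_polynomialFwdDiff_lt {p : R[X]} (hp : p ≠ 0) (h : R) :
    (polynomialFwdDiff h p).degree < p.degree := by
  simpa only [polynomialFwdDiff_apply, degree_taylor] using
    degree_sub_lt_left (degree_taylor p h) (by simpa using hp) (leadingCoeff_taylor h p)

variable [NoZeroDivisors R] [CharZero R]

lemma degree_polynomialFwdDiff {h : R} (hh : h ≠ 0) {p : R[X]} {m : ℕ}
    (hp : p.degree = ((m + 1 : ℕ) : WithBot ℕ)) :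
    (polynomialFwdDiff h p).degree = (m : WithBot ℕ) := by
  have hlead : p.coeff (m + 1) ≠ 0 := coeff_ne_zero_of_eq_degree hp
  have hp0 : p ≠ 0 := by
    rintro rfl
    exact hlead (coeff_zero _)
  refine degree_eq_of_le_of_coeff_ne_zero ?_ ?_
  · have hlt := hp ▸ degree_polynomialFwdDiff_lt hp0 h
    exact (degree_le_iff_coeff_zero _ _).mpr fun j hj =>
      coeff_eq_zero_of_degree_lt (hlt.trans_le (by exact_mod_cast hj))
  · rw [coeff_polynomialFwdDiff_of_natDegree_le_succ (natDegree_eq_of_degree_eq_some hp).le]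
    exact mul_ne_zero (mul_ne_zero (Nat.cast_add_one_ne_zero m) hlead) hh

lemma degree_polynomialFwdDiff_iterate {h : R} (hh : h ≠ 0) {p : R[X]} {m k : ℕ}
    (hp : p.degree = ((m + k : ℕ) : WithBot ℕ)) :
    ((polynomialFwdDiff h)^[k] p).degree = (m : WithBot ℕ) := by
  induction k generalizing p with
  | zero => exact hp
  | succ k ih => exact ih (degree_polynomialFwdDiff hh hp)

end Ring

section CommRing

variable {R : Type*} [CommRing R]

lemma fwdDiff_eval_natCast (h : ℕ) (p : R[X]) :
    fwdDiff h (fun n : ℕ => p.eval (n : R)) =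
      fun n : ℕ => (polynomialFwdDiff (h : R) p).eval (n : R) := by
  funext n
  simp only [fwdDiff, polynomialFwdDiff_apply, eval_sub, taylor_eval, Nat.cast_add]

lemma fwdDiff_iterate_eval_natCast (h k : ℕ) (p : R[X]) :
    (fwdDiff h)^[k] (fun n : ℕ => p.eval (n : R)) =
      fun n : ℕ => ((polynomialFwdDiff (h : R))^[k] p).eval (n : R) := by
  have hsemiconj : Function.Semiconj (fun (p : R[X]) (n : ℕ) => p.eval (n : R))
      (polynomialFwdDiff (h : R)) (fwdDiff h) := fun p => (fwdDiff_eval_natCast h p).symm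
  exact (hsemiconj.iterate_right k p).symm

lemma shift_sub_iterate_mul_pow (c : R) (k : ℕ) (y : ℕ → R) :
    (fun y : ℕ → R => fun n => y (n + 1) - c * y n)^[k] (fun n => y n * c ^ n) =
      fun n => c ^ k * (fwdDiff 1)^[k] y n * c ^ n := by
  induction k with
  | zero => simp
  | succ k ih =>
    funext n
    simp only [Function.iterate_succ_apply', ih, fwdDiff]
    ring

end CommRing

theorem stmt_7_general {R : Type*} [CommRing R] [NoZeroDivisors R] [CharZero R] {c : R}
    (hc : c ≠ 0) {k r : ℕ} (hkr : k ≤ r) {p : R[X]} (hp : p.degree = (r : WithBot ℕ)) :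
    ∃ q : R[X], q.degree = ((r - k : ℕ) : WithBot ℕ) ∧
      (fun y : ℕ → R => fun n => y (n + 1) - c * y n)^[k] (fun n => p.eval (n : R) * c ^ n) =
        fun n : ℕ => q.eval (n : R) * c ^ n := by
  refine ⟨C (c ^ k) * (polynomialFwdDiff 1)^[k] p, ?_, ?_⟩
  · rw [degree_C_mul (pow_ne_zero k hc)]
    exact degree_polynomialFwdDiff_iterate one_ne_zero (by rw [hp, Nat.sub_add_cancel hkr])
  · rw [shift_sub_iterate_mul_pow, fwdDiff_iterate_eval_natCast]
    simp only [eval_mul, eval_C, Nat.cast_one]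

/-- For `k ≤ r`, applying `(S - c • 1) ^ k` to `n ↦ n ^ r * c ^ n` gives `n ↦ q n * c ^ n`
for some polynomial `q` of degree exactly `r - k`. -/
theorem stmt_7 (c : ℂ) (hc : c ≠ 0) (k r : ℕ) (hkr : k ≤ r) :
    ∃ q : Polynomial ℂ, q.degree = ((r - k : ℕ) : WithBot ℕ) ∧
      (fun y : ℕ → ℂ => fun n => y (n + 1) - c * y n)^[k] (fun n => (n : ℂ) ^ r * c ^ n) =
        fun n : ℕ => q.eval (n : ℂ) * c ^ n := by
  simpa only [eval_pow, eval_X] using stmt_7_general hc hkr (degree_X_pow (R := ℂ) r)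
end

section
/- Let λ be a nonzero complex number and let k > r be nonnegative integers. Then applying (S − λ id)^k to the sequence n ↦ n^r · λ^n yields the zero sequence. -/
open Polynomial

/-!
Multiplication by `n ↦ c ^ n` intertwines `c` times the forward difference with `S - c • 1`, and
each forward difference lowers the degree of a polynomial.
-/

open fwdDiff

section ForwardDifference

variable {M N G F : Type*} [AddCommMonoid M] [AddCommMonoid N] [AddCommGroup G]
  [FunLike F M N] [AddHomClass F M N]

lemma fwdDiff_iter_comp_addHom (f : N → G) (φ : F) (h : M) (k : ℕ) :
    (Δ_[h])^[k] (f ∘ φ) = (Δ_[φ h])^[k] f ∘ φ := by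
  have semiconj : Function.Semiconj (fun g : N → G => g ∘ φ) Δ_[φ h] Δ_[h] := fun g => by
    ext x
    simp only [Function.comp_apply, fwdDiff, map_add]
  exact (semiconj.iterate_right k f).symm

lemma fwdDiff_iter_eval_natCast_eq_zero_s8 {R : Type*} [CommRing R] {P : R[X]} {k : ℕ}
    (hP : P.natDegree < k) : (Δ_[1])^[k] (fun n : ℕ => P.eval (n : R)) = 0 := by
  calc (Δ_[1])^[k] (P.eval ∘ Nat.castAddMonoidHom R)
      = (Δ_[Nat.castAddMonoidHom R 1])^[k] P.eval ∘ Nat.castAddMonoidHom R :=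
        fwdDiff_iter_comp_addHom ..
    _ = (Δ_[(1 : R)])^[k] P.eval ∘ Nat.castAddMonoidHom R := by
        rw [Nat.coe_castAddMonoidHom, Nat.cast_one]
    _ = 0 := by rw [fwdDiff_iter_eq_zero_of_degree_lt hP, Pi.zero_comp]

end ForwardDifference

section ShiftSub

variable {A E : Type*} [Monoid A] [AddCommGroup E] [DistribMulAction A E]

/-- The operator `S - c • 1` on sequences, where `S` is the shift `(S y) n = y (n + 1)`. It is
defined for any scalar action, which on scalar sequences is multiplication. -/
def shiftSub (c : A) (y : ℕ → E) : ℕ → E := fun n => y (n + 1) - c • y n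

lemma shiftSub_pow_smul (c : A) (f : ℕ → E) (k : ℕ) :
    shiftSub c (fun n => c ^ (n + k) • f n) = fun n => c ^ (n + (k + 1)) • Δ_[1] f n := by
  ext n
  calc c ^ (n + 1 + k) • f (n + 1) - c • c ^ (n + k) • f n
      = c ^ (n + (k + 1)) • f (n + 1) - c ^ (n + (k + 1)) • f n := by
        rw [smul_smul, ← pow_succ', add_right_comm n 1 k, add_assoc n k 1]
    _ = c ^ (n + (k + 1)) • Δ_[1] f n := (smul_sub _ _ _).symm

lemma shiftSub_iter_pow_smul (c : A) (f : ℕ → E) (k : ℕ) :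
    (shiftSub c)^[k] (fun n => c ^ n • f n) = fun n => c ^ (n + k) • (Δ_[1])^[k] f n := by
  induction k with
  | zero => rfl
  | succ k ih =>
    rw [Function.iterate_succ_apply', ih, shiftSub_pow_smul]
    simp only [Function.iterate_succ_apply']

end ShiftSub

theorem stmt_8_general {R : Type*} [CommRing R] (c : R) {P : R[X]} {k : ℕ}
    (hP : P.natDegree < k) : (shiftSub c)^[k] (fun n => P.eval (n : R) * c ^ n) = 0 := by
  calc (shiftSub c)^[k] (fun n => P.eval (n : R) * c ^ n)
      = (shiftSub c)^[k] (fun n => c ^ n • P.eval (n : R)) := by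
        simp only [smul_eq_mul, mul_comm]
    _ = fun n => c ^ (n + k) • (Δ_[1])^[k] (fun m : ℕ => P.eval (m : R)) n :=
        shiftSub_iter_pow_smul ..
    _ = 0 := by
        simp only [fwdDiff_iter_eval_natCast_eq_zero_s8 hP, Pi.zero_apply, smul_zero, Pi.zero_def]

/-- For `k > r`, applying `(S - c • 1) ^ k` to `n ↦ n ^ r * c ^ n` gives the zero sequence. -/
theorem stmt_8 (c : ℂ) (hc : c ≠ 0) (k r : ℕ) (hkr : r < k) :
    (fun y : ℕ → ℂ => fun n => y (n + 1) - c * y n)^[k] (fun n => (n : ℂ) ^ r * c ^ n) = 0 := by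
  have hdeg : (X ^ r : ℂ[X]).natDegree < k := (natDegree_X_pow_le r).trans_lt hkr
  change (shiftSub c)^[k] _ = 0
  simpa only [eval_pow, eval_X] using stmt_8_general c hdeg
end

section
/- Let λ₁, …, λ_s be distinct nonzero complex numbers and l₁, …, l_s positive integers. Then the subspaces G_{λ₁,l₁}, …, G_{λ_s,l_s} of the space of complex sequences are linearly independent: if y₁ + ⋯ + y_s = 0 with yᵢ ∈ G_{λᵢ,lᵢ} for each i, then yᵢ = 0 for all i. -/
open Polynomial

/-!
If `S` is the shift operator, then `S - c` sends `n ↦ c ^ n • f n` to `n ↦ c ^ (n + 1) • Δ f n`.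
Iterated differences of a polynomial eventually vanish, so `n ↦ c ^ n * p n` is a generalized
eigenvector of `S` for the eigenvalue `c`, and generalized eigenspaces for distinct eigenvalues
are independent.
-/

open fwdDiff

lemma fwdDiff_iter_comp {A B H F : Type*} [AddCommMonoid A] [AddCommMonoid B] [AddCommGroup H]
    [FunLike F A B] [AddHomClass F A B] (φ : F) (f : B → H) (a : A) (k : ℕ) :
    (Δ_[a])^[k] (f ∘ φ) = (Δ_[φ a])^[k] f ∘ φ := by
  induction k with
  | zero => rfl
  | succ k ih =>
    ext x
    simp only [Function.iterate_succ_apply', ih, fwdDiff, Function.comp_apply, map_add]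

lemma fwdDiff_iter_natCast_eval_eq_zero {R : Type*} [CommRing R] (p : R[X]) :
    (Δ_[1])^[p.natDegree + 1] (fun n : ℕ ↦ p.eval (n : R)) = 0 := by
  have hcomp := fwdDiff_iter_comp (Nat.castAddMonoidHom R) p.eval 1 (p.natDegree + 1)
  rwa [Nat.coe_castAddMonoidHom, Nat.cast_one, fwdDiff_iter_degree_add_one_eq_zero,
    Pi.zero_comp] at hcomp

section Shift

variable {R M : Type*} [CommRing R] [AddCommGroup M] [Module R M]

lemma shift_sub_smul_one_apply (c : R) (f : ℕ → M) :
    (LinearMap.funLeft R M Nat.succ - c • 1 : Module.End R (ℕ → M)) (fun n ↦ c ^ n • f n) =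
      c • fun n ↦ c ^ n • Δ_[1] f n := by
  ext n
  change c ^ (n + 1) • f (n + 1) - c • c ^ n • f n = c • c ^ n • (f (n + 1) - f n)
  rw [pow_succ', mul_smul, smul_sub, smul_sub]

lemma shift_sub_smul_one_pow_apply (c : R) (f : ℕ → M) (k : ℕ) :
    ((LinearMap.funLeft R M Nat.succ - c • 1 : Module.End R (ℕ → M)) ^ k)
      (fun n ↦ c ^ n • f n) = c ^ k • fun n ↦ c ^ n • (Δ_[1])^[k] f n := by
  induction k with
  | zero => simp
  | succ k ih =>
    rw [pow_succ', Module.End.mul_apply, ih, map_smul, shift_sub_smul_one_apply, smul_smul,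
      ← pow_succ, Function.iterate_succ_apply']

lemma pow_smul_mem_maxGenEigenspace_shift (c : R) {f : ℕ → M} {k : ℕ} (hf : (Δ_[1])^[k] f = 0) :
    (fun n ↦ c ^ n • f n) ∈
      Module.End.maxGenEigenspace (LinearMap.funLeft R M Nat.succ) c := by
  refine (Module.End.mem_maxGenEigenspace _ _ _).2 ⟨k, ?_⟩
  rw [shift_sub_smul_one_pow_apply, hf]
  ext n
  simp

theorem stmt_13_general [IsDomain R] [Module.IsTorsionFree R M] {ι : Type*} [Fintype ι]
    {c : ι → R} (hc : Function.Injective c) {f : ι → ℕ → M}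
    (hf : ∀ i, ∃ k, (Δ_[1])^[k] (f i) = 0) (hsum : ∑ i, (fun n ↦ c i ^ n • f i n) = 0) (i : ι) :
    (fun n ↦ c i ^ n • f i n) = 0 := by
  have hmem (j : ι) : (fun n ↦ c j ^ n • f j n) ∈
      Module.End.maxGenEigenspace (LinearMap.funLeft R M Nat.succ) (c j) :=
    (hf j).elim fun _ hk ↦ pow_smul_mem_maxGenEigenspace_shift (c j) hk
  have hindep := (Module.End.independent_maxGenEigenspace (LinearMap.funLeft R M Nat.succ)).comp hc
  exact (iSupIndep_iff_finsetSum_eq_zero_imp_eq_zero _).1 hindep Finset.univ _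
    (fun j _ ↦ hmem j) hsum i (Finset.mem_univ i)

end Shift

/-- The subspaces `G (c i) (l i)` for distinct nonzero `c i` are linearly independent. -/
theorem stmt_13 (s : ℕ) (c : Fin s → ℂ) (l : Fin s → ℕ)
    (hc : Function.Injective c) (hc0 : ∀ i, c i ≠ 0) (hl : ∀ i, 0 < l i)
    (y : Fin s → (ℕ → ℂ)) (hy : ∀ i, y i ∈ G (c i) (l i)) (hsum : ∑ i, y i = 0) :
    ∀ i, y i = 0 := by
  choose p _ hp using hy
  obtain rfl : (fun i ↦ seqOfPoly (c i) (p i)) = y := funext hp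
  exact stmt_13_general hc (fun i ↦ ⟨_, fwdDiff_iter_natCast_eval_eq_zero (p i)⟩) hsum
end
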